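/- Fix λ ≥ λ₀ and set b(p) := √(λ − 2Γ(p)). Suppose that for each μ ≥ 0 the function z_μ : [p₀,0] → ℝ is C¹ with z_μ(p₀) = 0, z_μ′(p₀) = 1, and p ↦ b(p)³z_μ′(p) is differentiable on (p₀,0) with derivative μ·b·z_μ. Then λ^{3/2}·z_μ′(0) − (g + σμ)·z_μ(0) → −∞ as μ → ∞. -/

import Mathlib

open Set Filter

/-!
Write `w = P u'` for the flux of a solution of `(P u')' = q u` with `P > 0` and `q ≥ 0`. Then
`(u w)' = P u'² + q u² ≥ 0`, so `u w ≥ 0` when `u` vanishes at the left end, and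
`(w²)' = 2 q u w ≥ 0` keeps the flux above its initial value. This bounds `u` at the right end
from below by a constant independent of `q`. On the other hand, `P q ≤ K²` gives
`(w²)' ≤ K² (u²)'`, so `w` exceeds its initial value by at most `K u`. For `q = μ Q` this `K` is
of order `√μ`, which `σ μ` beats.
-/

lemma monotoneOn_Icc_of_hasDerivAt_nonneg {f f' : ℝ → ℝ} {a b : ℝ}
    (hf : ContinuousOn f (Icc a b)) (hf' : ∀ x ∈ Ioo a b, HasDerivAt f (f' x) x)
    (hf'_nonneg : ∀ x ∈ Ioo a b, 0 ≤ f' x) : MonotoneOn f (Icc a b) := by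
  rw [← interior_Icc] at hf' hf'_nonneg
  exact monotoneOn_of_hasDerivWithinAt_nonneg (convex_Icc a b) hf
    (fun x hx => (hf' x hx).hasDerivWithinAt) hf'_nonneg

lemma sub_mul_pos_of_mul_sSup_image_lt {α : Type*} {s : Set α} {f : α → ℝ} {k c : ℝ}
    (hk : 0 ≤ k) (hf : BddAbove (f '' s)) (hc : k * sSup (f '' s) < c) {x : α} (hx : x ∈ s) :
    0 < c - k * f x :=
  sub_pos.2 <| (mul_le_mul_of_nonneg_left (le_csSup hf (mem_image_of_mem f hx)) hk).trans_lt hc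

lemma tendsto_mul_sub_sqrt_mul_atTop {σ : ℝ} (hσ : 0 < σ) (C : ℝ) :
    Tendsto (fun μ => σ * μ - √(C * μ)) atTop atTop := by
  have hfactored : Tendsto (fun μ => √μ * (σ * √μ - √C)) atTop atTop :=
    Real.tendsto_sqrt_atTop.atTop_mul_atTop₀ <|
      tendsto_atTop_add_const_right _ _ (Real.tendsto_sqrt_atTop.const_mul_atTop hσ)
  refine hfactored.congr' ?_
  filter_upwards [eventually_ge_atTop 0] with μ hμ
  rw [Real.sqrt_mul' C hμ]
  linear_combination σ * Real.mul_self_sqrt hμ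

/-- `u`, with derivative `u'`, solves the Sturm–Liouville equation `(P u')' = q u` on `[a, b]`:
the equation holds in the interior, and the flux `P u'` is continuous up to the ends. The
derivative is a separate argument, so that its values at the ends are the one-sided ones. -/
structure IsSturmLiouvilleSolution (P q : ℝ → ℝ) (a b : ℝ) (u u' : ℝ → ℝ) : Prop where
  hasDerivWithinAt : ∀ x ∈ Icc a b, HasDerivWithinAt u (u' x) (Icc a b) x
  continuousOn_flux : ContinuousOn (fun x => P x * u' x) (Icc a b)
  hasDerivAt_flux : ∀ x ∈ Ioo a b, HasDerivAt (fun x => P x * u' x) (q x * u x) x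

namespace IsSturmLiouvilleSolution

variable {P q u u' : ℝ → ℝ} {a b x B K : ℝ}

lemma continuousOn (h : IsSturmLiouvilleSolution P q a b u u') : ContinuousOn u (Icc a b) :=
  fun x hx => (h.hasDerivWithinAt x hx).continuousWithinAt

lemma hasDerivAt (h : IsSturmLiouvilleSolution P q a b u u') (hx : x ∈ Ioo a b) :
    HasDerivAt u (u' x) x :=
  (h.hasDerivWithinAt x (Ioo_subset_Icc_self hx)).hasDerivAt (Icc_mem_nhds hx.1 hx.2)

lemma monotoneOn_mul_flux (h : IsSturmLiouvilleSolution P q a b u u')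
    (hP : ∀ x ∈ Ioo a b, 0 ≤ P x) (hq : ∀ x ∈ Ioo a b, 0 ≤ q x) :
    MonotoneOn (fun x => u x * (P x * u' x)) (Icc a b) := by
  refine monotoneOn_Icc_of_hasDerivAt_nonneg (h.continuousOn.mul h.continuousOn_flux)
    (fun x hx => (h.hasDerivAt hx).mul (h.hasDerivAt_flux x hx)) fun x hx => ?_
  have hPx := hP x hx
  have hqx := hq x hx
  calc 0 ≤ P x * u' x ^ 2 + q x * u x ^ 2 := by positivity
    _ = u' x * (P x * u' x) + u x * (q x * u x) := by ring

lemma mul_flux_nonneg (h : IsSturmLiouvilleSolution P q a b u u')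
    (hP : ∀ x ∈ Ioo a b, 0 ≤ P x) (hq : ∀ x ∈ Ioo a b, 0 ≤ q x)
    (ha : 0 ≤ u a * (P a * u' a)) (hx : x ∈ Icc a b) : 0 ≤ u x * (P x * u' x) :=
  ha.trans <| h.monotoneOn_mul_flux hP hq (left_mem_Icc.2 (hx.1.trans hx.2)) hx hx.1

lemma monotoneOn_flux_sq (h : IsSturmLiouvilleSolution P q a b u u')
    (hP : ∀ x ∈ Ioo a b, 0 ≤ P x) (hq : ∀ x ∈ Ioo a b, 0 ≤ q x)
    (ha : 0 ≤ u a * (P a * u' a)) : MonotoneOn (fun x => (P x * u' x) ^ 2) (Icc a b) := by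
  refine monotoneOn_Icc_of_hasDerivAt_nonneg (h.continuousOn_flux.pow 2)
    (fun x hx => (h.hasDerivAt_flux x hx).pow 2) fun x hx => ?_
  have hqx := hq x hx
  have hux := h.mul_flux_nonneg hP hq ha (Ioo_subset_Icc_self hx)
  calc 0 ≤ 2 * q x * (u x * (P x * u' x)) := by positivity
    _ = _ := by push_cast; ring

lemma flux_pos (h : IsSturmLiouvilleSolution P q a b u u')
    (hP : ∀ x ∈ Ioo a b, 0 ≤ P x) (hq : ∀ x ∈ Ioo a b, 0 ≤ q x)
    (hua : 0 ≤ u a) (hwa : 0 < P a * u' a) (hx : x ∈ Icc a b) : 0 < P x * u' x := by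
  by_contra! hwx
  have hxb : Icc a x ⊆ Icc a b := Icc_subset_Icc_right hx.2
  obtain ⟨y, hy, hwy⟩ :=
    intermediate_value_Icc' hx.1 (h.continuousOn_flux.mono hxb) ⟨hwx, hwa.le⟩
  have hsq : (P a * u' a) ^ 2 ≤ (P y * u' y) ^ 2 :=
    h.monotoneOn_flux_sq hP hq (mul_nonneg hua hwa.le) (left_mem_Icc.2 (hx.1.trans hx.2))
      (hxb hy) hy.1
  have hwa_sq : 0 < (P a * u' a) ^ 2 := by positivity
  rw [show P y * u' y = 0 from hwy] at hsq
  linarith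

lemma flux_left_le (h : IsSturmLiouvilleSolution P q a b u u')
    (hP : ∀ x ∈ Ioo a b, 0 ≤ P x) (hq : ∀ x ∈ Ioo a b, 0 ≤ q x)
    (hua : 0 ≤ u a) (hwa : 0 < P a * u' a) (hx : x ∈ Icc a b) : P a * u' a ≤ P x * u' x :=
  le_of_sq_le_sq
    (h.monotoneOn_flux_sq hP hq (mul_nonneg hua hwa.le) (left_mem_Icc.2 (hx.1.trans hx.2)) hx hx.1)
    (h.flux_pos hP hq hua hwa hx).le

lemma flux_left_div_le_deriv (h : IsSturmLiouvilleSolution P q a b u u')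
    (hP : ∀ x ∈ Ioo a b, 0 < P x) (hPB : ∀ x ∈ Ioo a b, P x ≤ B)
    (hq : ∀ x ∈ Ioo a b, 0 ≤ q x) (hua : 0 ≤ u a) (hwa : 0 < P a * u' a) (hx : x ∈ Ioo a b) :
    P a * u' a / B ≤ u' x := by
  have hP' : ∀ x ∈ Ioo a b, 0 ≤ P x := fun x hx => (hP x hx).le
  have hxI := Ioo_subset_Icc_self hx
  have hu'x : 0 < u' x := pos_of_mul_pos_right (h.flux_pos hP' hq hua hwa hxI) (hP' x hx)
  rw [div_le_iff₀' ((hP x hx).trans_le (hPB x hx))]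
  calc P a * u' a ≤ P x * u' x := h.flux_left_le hP' hq hua hwa hxI
    _ ≤ B * u' x := by gcongr; exact hPB x hx

lemma flux_left_div_mul_le_sub (h : IsSturmLiouvilleSolution P q a b u u') (hab : a ≤ b)
    (hP : ∀ x ∈ Ioo a b, 0 < P x) (hPB : ∀ x ∈ Ioo a b, P x ≤ B)
    (hq : ∀ x ∈ Ioo a b, 0 ≤ q x) (hua : 0 ≤ u a) (hwa : 0 < P a * u' a) :
    P a * u' a / B * (b - a) ≤ u b - u a := by
  refine (convex_Icc a b).mul_sub_le_image_sub_of_le_deriv h.continuousOn ?_ ?_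
    a (left_mem_Icc.2 hab) b (right_mem_Icc.2 hab) hab <;> rw [interior_Icc]
  · exact fun x hx => (h.hasDerivAt hx).differentiableAt.differentiableWithinAt
  · intro x hx
    rw [(h.hasDerivAt hx).deriv]
    exact h.flux_left_div_le_deriv hP hPB hq hua hwa hx

lemma monotoneOn_sq_sub_flux_sq (h : IsSturmLiouvilleSolution P q a b u u')
    (hP : ∀ x ∈ Ioo a b, 0 < P x) (hq : ∀ x ∈ Ioo a b, 0 ≤ q x)
    (hPq : ∀ x ∈ Ioo a b, P x * q x ≤ K ^ 2) (ha : 0 ≤ u a * (P a * u' a)) :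
    MonotoneOn (fun x => K ^ 2 * u x ^ 2 - (P x * u' x) ^ 2) (Icc a b) := by
  refine monotoneOn_Icc_of_hasDerivAt_nonneg
    ((continuousOn_const.mul (h.continuousOn.pow 2)).sub (h.continuousOn_flux.pow 2))
    (fun x hx => (((h.hasDerivAt hx).pow 2).const_mul _).sub ((h.hasDerivAt_flux x hx).pow 2))
    fun x hx => ?_
  have huu' : 0 ≤ u x * u' x := by
    refine nonneg_of_mul_nonneg_right (a := P x) ?_ (hP x hx)
    rw [mul_left_comm]
    exact h.mul_flux_nonneg (fun y hy => (hP y hy).le) hq ha (Ioo_subset_Icc_self hx)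
  calc 0 ≤ 2 * (K ^ 2 - P x * q x) * (u x * u' x) :=
        mul_nonneg (mul_nonneg zero_le_two (sub_nonneg.2 (hPq x hx))) huu'
    _ = _ := by push_cast; ring

lemma flux_right_le (h : IsSturmLiouvilleSolution P q a b u u') (hab : a ≤ b)
    (hP : ∀ x ∈ Ioo a b, 0 < P x) (hq : ∀ x ∈ Ioo a b, 0 ≤ q x) (hK : 0 ≤ K)
    (hPq : ∀ x ∈ Ioo a b, P x * q x ≤ K ^ 2) (hua : u a = 0) (hub : 0 ≤ u b)
    (hwa : 0 ≤ P a * u' a) : P b * u' b ≤ P a * u' a + K * u b := by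
  have hmono : K ^ 2 * u a ^ 2 - (P a * u' a) ^ 2 ≤ K ^ 2 * u b ^ 2 - (P b * u' b) ^ 2 :=
    h.monotoneOn_sq_sub_flux_sq hP hq hPq (by simp [hua]) (left_mem_Icc.2 hab)
      (right_mem_Icc.2 hab) hab
  have hcross : 0 ≤ 2 * (P a * u' a) * (K * u b) := by positivity
  refine le_of_sq_le_sq ?_ (by positivity)
  calc (P b * u' b) ^ 2 ≤ (P a * u' a) ^ 2 + K ^ 2 * u b ^ 2 := by
        rw [hua] at hmono
        linarith
    _ ≤ (P a * u' a + K * u b) ^ 2 := by linarith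

lemma flux_right_sub_mul_le (h : IsSturmLiouvilleSolution P q a b u u') (hab : a < b)
    (hP : ∀ x ∈ Ioo a b, 0 < P x) (hPB : ∀ x ∈ Ioo a b, P x ≤ B)
    (hq : ∀ x ∈ Ioo a b, 0 ≤ q x) (hK : 0 ≤ K) (hPq : ∀ x ∈ Ioo a b, P x * q x ≤ K ^ 2)
    (hua : u a = 0) (hwa : 0 < P a * u' a) {k : ℝ} (hKk : K ≤ k) :
    P b * u' b - k * u b ≤ P a * u' a - (k - K) * (P a * u' a / B * (b - a)) := by
  obtain ⟨x, hx⟩ := nonempty_Ioo.2 hab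
  have hB : 0 < B := (hP x hx).trans_le (hPB x hx)
  have hub_ge : P a * u' a / B * (b - a) ≤ u b := by
    simpa [hua] using h.flux_left_div_mul_le_sub hab.le hP hPB hq hua.ge hwa
  have hub : 0 ≤ u b := (mul_pos (div_pos hwa hB) (sub_pos.2 hab)).le.trans hub_ge
  calc P b * u' b - k * u b ≤ P a * u' a + K * u b - k * u b := by
        gcongr; exact h.flux_right_le hab.le hP hq hK hPq hua hub hwa.le
    _ = P a * u' a - (k - K) * u b := by ring
    _ ≤ P a * u' a - (k - K) * (P a * u' a / B * (b - a)) := by gcongr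

end IsSturmLiouvilleSolution

theorem stmt_8_general {a b σ : ℝ} (hab : a < b) (hσ : 0 < σ) (g : ℝ) {P Q : ℝ → ℝ}
    (hP : ∀ x ∈ Icc a b, 0 < P x) (hP_bdd : BddAbove (P '' Icc a b))
    (hQ : ∀ x ∈ Icc a b, 0 ≤ Q x) (hQ_bdd : BddAbove (Q '' Icc a b)) {u u' : ℝ → ℝ → ℝ}
    (hu : ∀ᶠ μ in atTop, IsSturmLiouvilleSolution P (fun x => μ * Q x) a b (u μ) (u' μ))
    (hua : ∀ᶠ μ in atTop, u μ a = 0) (hu'a : ∀ᶠ μ in atTop, u' μ a = 1) :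
    Tendsto (fun μ => P b * u' μ b - (g + σ * μ) * u μ b) atTop atBot := by
  obtain ⟨B, hB⟩ := hP_bdd
  obtain ⟨D, hD⟩ := hQ_bdd
  rw [mem_upperBounds, forall_mem_image] at hB hD
  have hPa : 0 < P a := hP a (left_mem_Icc.2 hab.le)
  have hB_pos : 0 < B := hPa.trans_le (hB (left_mem_Icc.2 hab.le))
  have hc : 0 < P a / B * (b - a) := mul_pos (div_pos hPa hB_pos) (sub_pos.2 hab)
  have hgap : Tendsto (fun μ => g + σ * μ - √(B * D * μ)) atTop atTop := by
    simpa only [add_sub_assoc] using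
      tendsto_atTop_add_const_left _ g (tendsto_mul_sub_sqrt_mul_atTop hσ (B * D))
  have hbound : Tendsto (fun μ => P a - (g + σ * μ - √(B * D * μ)) * (P a / B * (b - a)))
      atTop atBot :=
    tendsto_atBot_add_const_left _ _ (tendsto_neg_atTop_atBot.comp (hgap.atTop_mul_const hc))
  refine tendsto_atBot_mono' _ ?_ hbound
  filter_upwards [hu, hua, hu'a, eventually_ge_atTop 0, hgap.eventually_ge_atTop 0]
    with μ hu hua hu'a hμ hgap_nonneg
  have hPQ : ∀ x ∈ Icc a b, P x * (μ * Q x) ≤ √(B * D * μ) ^ 2 := fun x hx =>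
    calc P x * (μ * Q x) = P x * Q x * μ := by ring
      _ ≤ B * D * μ :=
        mul_le_mul_of_nonneg_right (mul_le_mul (hB hx) (hD hx) (hQ x hx) hB_pos.le) hμ
      _ ≤ √(B * D * μ) ^ 2 := (Real.sqrt_le_left (Real.sqrt_nonneg _)).1 le_rfl
  have hsub : Ioo a b ⊆ Icc a b := Ioo_subset_Icc_self
  simpa only [hu'a, mul_one] using hu.flux_right_sub_mul_le hab (fun x hx => hP x (hsub hx))
    (fun x hx => hB (hsub hx)) (fun x hx => mul_nonneg hμ (hQ x (hsub hx))) (Real.sqrt_nonneg _)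
    (fun x hx => hPQ x (hsub hx)) hua (by simpa [hu'a] using hPa) (sub_nonneg.1 hgap_nonneg)

/-- Fix `λ ≥ λ₀` and `b(p) := √(λ − 2Γ(p))`. If for each `μ ≥ 0` the function
`z_μ` solves `(b³z_μ′)′ = μ b z_μ` on `(p₀,0)` with `z_μ(p₀)=0, z_μ′(p₀)=1`, then
`λ^{3/2} z_μ′(0) − (g+σμ) z_μ(0) → −∞` as `μ → ∞`. -/
theorem stmt_8 (p₀ g σ lam₀ lam : ℝ) (hp₀ : p₀ < 0) (hg : 0 < g) (hσ : 0 < σ)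
    (Γ : ℝ → ℝ) (K : NNReal) (hΓ : LipschitzOnWith K Γ (Set.Icc p₀ 0)) (hΓ0 : Γ 0 = 0)
    (hlam₀ : 2 * sSup (Γ '' Set.Icc p₀ 0) < lam₀)
    (hlam₀' : g * ∫ p in p₀..0, (Real.sqrt (lam₀ - 2 * Γ p) ^ 3)⁻¹ = 1)
    (hlam : lam₀ ≤ lam)
    (z z' : ℝ → ℝ → ℝ)
    (hz : ∀ μ : ℝ, 0 ≤ μ → ∀ p ∈ Set.Icc p₀ 0,
      HasDerivWithinAt (z μ) (z' μ p) (Set.Icc p₀ 0) p)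
    (hzc : ∀ μ : ℝ, 0 ≤ μ → ContinuousOn (z' μ) (Set.Icc p₀ 0))
    (hz0 : ∀ μ : ℝ, 0 ≤ μ → z μ p₀ = 0)
    (hz1 : ∀ μ : ℝ, 0 ≤ μ → z' μ p₀ = 1)
    (hzode : ∀ μ : ℝ, 0 ≤ μ → ∀ p ∈ Set.Ioo p₀ 0,
      HasDerivAt (fun s => Real.sqrt (lam - 2 * Γ s) ^ 3 * z' μ s)
        (μ * Real.sqrt (lam - 2 * Γ p) * z μ p) p) :
    Tendsto (fun μ : ℝ => Real.sqrt lam ^ 3 * z' μ 0 - (g + σ * μ) * z μ 0)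
      atTop atBot := by
  have hb : ContinuousOn (fun p => √(lam - 2 * Γ p)) (Icc p₀ 0) :=
    (continuousOn_const.sub (continuousOn_const.mul hΓ.continuousOn)).sqrt
  have hb_pos : ∀ p ∈ Icc p₀ 0, 0 < √(lam - 2 * Γ p) := fun p hp =>
    Real.sqrt_pos.2 <| sub_mul_pos_of_mul_sSup_image_lt zero_le_two
      (isCompact_Icc.bddAbove_image hΓ.continuousOn) (hlam₀.trans_le hlam) hp
  have hsol : ∀ μ, 0 ≤ μ → IsSturmLiouvilleSolution (fun p => √(lam - 2 * Γ p) ^ 3)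
      (fun p => μ * √(lam - 2 * Γ p)) p₀ 0 (z μ) (z' μ) := fun μ hμ =>
    ⟨hz μ hμ, (hb.pow 3).mul (hzc μ hμ), hzode μ hμ⟩
  have hμ_nonneg : ∀ᶠ μ : ℝ in atTop, 0 ≤ μ := eventually_ge_atTop 0
  simpa [hΓ0] using stmt_8_general hp₀ hσ g (fun p hp => pow_pos (hb_pos p hp) 3)
    (isCompact_Icc.bddAbove_image (hb.pow 3)) (fun p hp => (hb_pos p hp).le)
    (isCompact_Icc.bddAbove_image hb) (hμ_nonneg.mono hsol) (hμ_nonneg.mono hz0)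
    (hμ_nonneg.mono hz1)
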